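/- arXiv:2307.01127 — 2 statements merged into one kernel-verified Lean document; each statement's English description precedes it below -/
import Mathlib

section
/- For every δ with 0 < δ < e^{-3/2}, there exists l ∈ (1,2) such that for every s ≠ 0 one has l ≤ F₁'(s)·s / F₁(s) ≤ 2, where F₁' denotes the derivative of F₁. -/
noncomputable def F1 (δ s : ℝ) : ℝ :=
  if |s| < δ then -(1/2) * s^2 * Real.log (s^2)
  else -(1/2) * s^2 * (Real.log (δ^2) + 3) + 2*δ*|s| - (1/2)*δ^2

theorem hd_in (s : ℝ) (hs : 0 < s) :
    HasDerivAt (fun x : ℝ => -(1/2) * x^2 * Real.log (x^2)) (-(Real.log (s^2) + 1) * s) s := by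
  have h1 : HasDerivAt (fun x : ℝ => x^2) (2 * s) s := by
    simpa using hasDerivAt_pow 2 s
  have h2 := h1.log (by positivity)
  have h3 := (h1.const_mul (-(1/2) : ℝ)).mul h2
  refine h3.congr_deriv ?_
  field_simp
  ring

theorem hd_out (δ c s : ℝ) :
    HasDerivAt (fun x : ℝ => -(1/2) * x^2 * c + 2*δ*x - (1/2)*δ^2) (-c * s + 2 * δ) s := by
  have h1 : HasDerivAt (fun x : ℝ => x^2) (2 * s) s := by
    simpa using hasDerivAt_pow 2 s
  have h3 := (((h1.const_mul (-(1/2) : ℝ)).mul_const c).add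
    ((hasDerivAt_id s).const_mul (2*δ))).sub_const ((1/2)*δ^2)
  refine h3.congr_deriv ?_
  ring

theorem F1_in (δ x : ℝ) (h0 : 0 < x) (h : x ≤ δ) :
    F1 δ x = -(1/2) * x^2 * Real.log (x^2) := by
  unfold F1
  rw [abs_of_pos h0]
  split_ifs with h1
  · rfl
  · have : x = δ := le_antisymm h (not_lt.mp h1)
    subst this
    ring

theorem F1_out (δ x : ℝ) (h0 : 0 < x) (h : δ ≤ x) :
    F1 δ x = -(1/2) * x^2 * (Real.log (δ^2) + 3) + 2*δ*x - (1/2)*δ^2 := by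
  unfold F1
  rw [abs_of_pos h0, if_neg (not_lt.mpr h)]

theorem hd_F1_in (δ s : ℝ) (h0 : 0 < s) (h : s < δ) :
    HasDerivAt (F1 δ) (-(Real.log (s^2) + 1) * s) s := by
  refine (hd_in s h0).congr_of_eventuallyEq ?_
  filter_upwards [lt_mem_nhds h0, gt_mem_nhds h] with x hx hx'
  exact F1_in δ x hx hx'.le

theorem hd_F1_out (δ s : ℝ) (hδ : 0 < δ) (h : δ ≤ s) :
    HasDerivAt (F1 δ) (-(Real.log (δ^2) + 3) * s + 2 * δ) s := by
  have h0 : 0 < s := hδ.trans_le h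
  rcases h.lt_or_eq with h | h
  · refine (hd_out δ _ s).congr_of_eventuallyEq ?_
    filter_upwards [lt_mem_nhds h0, lt_mem_nhds h] with x hx hx'
    exact F1_out δ x hx hx'.le
  · subst h
    have hr : HasDerivWithinAt (F1 δ) (-(Real.log (δ^2) + 3) * δ + 2 * δ) (Set.Ici δ) δ := by
      refine (hd_out δ _ δ).hasDerivWithinAt.congr (fun x hx => ?_) (F1_out δ δ hδ le_rfl)
      exact F1_out δ x (hδ.trans_le hx) hx
    have hl : HasDerivWithinAt (F1 δ) (-(Real.log (δ^2) + 3) * δ + 2 * δ) (Set.Iic δ) δ := by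
      have h1 : HasDerivAt (fun x : ℝ => -(1/2) * x^2 * Real.log (x^2))
          (-(Real.log (δ^2) + 3) * δ + 2 * δ) δ := (hd_in δ hδ).congr_deriv (by ring)
      refine h1.hasDerivWithinAt.congr_of_eventuallyEq ?_ (F1_in δ δ hδ le_rfl)
      filter_upwards [self_mem_nhdsWithin, mem_nhdsWithin_of_mem_nhds (lt_mem_nhds hδ)] with x hx hx'
      exact F1_in δ x hx' hx
    have := hl.union hr
    rwa [Set.Iic_union_Ici, hasDerivWithinAt_univ] at this

theorem F1_even (δ s : ℝ) : F1 δ (-s) = F1 δ s := by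
  simp [F1]

theorem F1_deriv_odd (δ s : ℝ) : deriv (F1 δ) (-s) = - deriv (F1 δ) s := by
  have h := deriv_comp_neg (F1 δ) s
  have h2 : (fun x => F1 δ (-x)) = F1 δ := funext (F1_even δ)
  rw [h2] at h
  linarith

theorem F1_bound (δ : ℝ) (hδ : 0 < δ) (A : ℝ) (hA : 0 < A) (hAL : Real.log (δ^2) = -(A + 3))
    (s : ℝ) (hs : 0 < s) :
    1 + A/(A+4) ≤ deriv (F1 δ) s * s / F1 δ s ∧ deriv (F1 δ) s * s / F1 δ s ≤ 2 := by
  rcases lt_or_ge s δ with h | h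
  · rw [(hd_F1_in δ s hs h).deriv, F1_in δ s hs h.le]
    have hlog : Real.log (s^2) ≤ Real.log (δ^2) :=
      Real.log_le_log (by positivity) (by gcongr)
    obtain ⟨M, hM⟩ : ∃ M, Real.log (s^2) = -M := ⟨-Real.log (s^2), by ring⟩
    rw [hM] at hlog ⊢
    have hMA : A + 3 ≤ M := by linarith
    have hMpos : 0 < M := by linarith
    have e : -(-M + 1) * s * s / (-(1/2) * s^2 * -M) = 2 - 2 / M := by
      field_simp
      ring
    rw [e]
    have e2 : 1 + A/(A+4) = 2 - 4/(A+4) := by field_simp; ring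
    rw [e2]
    constructor
    · have : 2 / M ≤ 4/(A+4) := by
        rw [div_le_div_iff₀ hMpos (by linarith)]; linarith
      linarith
    · have : 0 < 2 / M := by positivity
      linarith
  · rw [(hd_F1_out δ s hδ h).deriv, F1_out δ s hs h, hAL]
    have hpos : 0 < -(1/2) * s^2 * (-(A+3) + 3) + 2*δ*s - (1/2)*δ^2 := by
      have : 0 < A * s^2 := by positivity
      nlinarith [mul_le_mul_of_nonneg_left h hδ.le, mul_pos hδ hs]
    constructor
    · rw [le_div_iff₀ hpos]
      have e2 : 1 + A/(A+4) = (2*A+4)/(A+4) := by field_simp; ring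
      rw [e2, div_mul_eq_mul_div, div_le_iff₀ (by linarith)]
      -- 2 A s^2 - 2 A δ s + (A+2) δ^2 ≥ 0
      nlinarith [mul_nonneg hA.le (sq_nonneg (s - δ)), mul_nonneg hA.le (sq_nonneg s), sq_nonneg δ]
    · rw [div_le_iff₀ hpos]
      nlinarith [mul_le_mul_of_nonneg_left h hδ.le, mul_pos hδ hs]

theorem stmt4 (δ : ℝ) (hδ : 0 < δ) (hδ' : δ < Real.exp (-(3/2))) :
    ∃ l : ℝ, 1 < l ∧ l < 2 ∧ ∀ s : ℝ, s ≠ 0 →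
      l ≤ deriv (F1 δ) s * s / F1 δ s ∧ deriv (F1 δ) s * s / F1 δ s ≤ 2 := by
  have hl : Real.log δ < -(3/2) := (Real.log_lt_iff_lt_exp hδ).mpr hδ'
  have hl2 : Real.log (δ^2) = 2 * Real.log δ := by simp
  obtain ⟨A, hA⟩ : ∃ A, A = -Real.log (δ^2) - 3 := ⟨_, rfl⟩
  have hA0 : 0 < A := by linarith
  refine ⟨1 + A/(A+4), ?_, ?_, fun s hs => ?_⟩
  · have : 0 < A/(A+4) := by positivity
    linarith
  · have : A/(A+4) < 1 := by rw [div_lt_one (by linarith)]; linarith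
    linarith
  · rcases lt_or_gt_of_ne hs with h | h
    · have := F1_bound δ hδ A hA0 (by linarith) (-s) (by linarith)
      rw [F1_deriv_odd, F1_even, neg_mul_neg] at this
      exact this
    · exact F1_bound δ hδ A hA0 (by linarith) s h
end

section
/- For every δ > 0 and every s ∈ ℝ, one has ((1/2)·F₂'(s)·s - F₂(s)) - ((1/2)·F₁'(s)·s - F₁(s)) = (1/2)·s², where F₁', F₂' denote the derivatives of F₁, F₂. -/
noncomputable def F2 (δ s : ℝ) : ℝ :=
  if |s| ≤ δ then 0
  else (1/2) * s^2 * Real.log (s^2/δ^2) + 2*δ*|s| - (3/2)*s^2 - (1/2)*δ^2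

noncomputable def PP (δ s : ℝ) : ℝ :=
  (1/2) * s^2 * Real.log (s^2/δ^2) + 2*δ*|s| - (3/2)*s^2 - (1/2)*δ^2

theorem PP_hasDerivAt (δ : ℝ) (hδ : 0 < δ) (s : ℝ) (hs : s ≠ 0) :
    HasDerivAt (PP δ) (s * Real.log (s^2/δ^2) + 2*δ*(SignType.sign s : ℝ) - 2*s) s := by
  have h1 : HasDerivAt (fun x : ℝ => x^2) (2*s) s := by
    simpa using hasDerivAt_pow 2 s
  have h2 := (h1.div_const (δ^2)).log (by positivity)
  have h3 := ((((h1.const_mul (1/2)).mul h2).add ((hasDerivAt_abs hs).const_mul (2*δ))).sub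
    (h1.const_mul (3/2))).sub_const ((1/2)*δ^2)
  refine h3.congr_deriv ?_
  field_simp
  ring

theorem F2_diff (δ : ℝ) (hδ : 0 < δ) (s : ℝ) (hs : s ≠ 0) :
    DifferentiableAt ℝ (F2 δ) s := by
  have hP := PP_hasDerivAt δ hδ s hs
  rcases lt_trichotomy |s| δ with h | h | h
  · have : F2 δ =ᶠ[nhds s] fun _ => 0 := by
      filter_upwards [continuous_abs.continuousAt.eventually_lt continuousAt_const h] with x hx
      simp [F2, hx.le]
    exact (differentiableAt_const (0:ℝ)).congr_of_eventuallyEq this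
  · have hsq : s^2 = δ^2 := by rw [← h, sq_abs]
    have h0 : PP δ s = 0 := by
      have : δ ≠ 0 := hδ.ne'
      simp only [PP, hsq, h]
      rw [div_self (by positivity), Real.log_one]; ring
    have hd : s * Real.log (s^2/δ^2) + 2*δ*(SignType.sign s : ℝ) - 2*s = 0 := by
      rw [hsq, div_self (by positivity), Real.log_one, ← h]
      have := abs_mul_sign s
      linarith
    rw [hd] at hP
    have hF : HasDerivAt (F2 δ) 0 s := by
      rw [hasDerivAt_iff_isLittleO] at hP ⊢
      refine Asymptotics.IsBigO.trans_isLittleO (Asymptotics.IsBigO.of_bound 1 ?_) hP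
      filter_upwards with x
      have : F2 δ s = 0 := by simp [F2, h]
      rw [this, h0]
      by_cases hx : |x| ≤ δ
      · simp [F2, hx]
      · simp [F2, hx, PP]
    exact hF.differentiableAt
  · have : F2 δ =ᶠ[nhds s] PP δ := by
      filter_upwards [continuousAt_const.eventually_lt continuous_abs.continuousAt h] with x hx
      simp [F2, PP, not_le.2 hx]
    exact hP.differentiableAt.congr_of_eventuallyEq this

theorem F1_eq (δ : ℝ) (hδ : 0 < δ) :
    F1 δ = fun s => F2 δ s - (1/2) * s^2 * Real.log (s^2) := by
  funext s
  rcases lt_trichotomy |s| δ with h | h | h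
  · simp [F1, F2, h, h.le]
  · have hsq : s^2 = δ^2 := by rw [← h, sq_abs]
    simp only [F1, F2, h, hsq, lt_irrefl, le_refl, if_true, if_false]
    ring
  · have hs : s ≠ 0 := by rintro rfl; simp at h; linarith
    simp only [F1, F2, not_lt.2 h.le, not_le.2 h, if_false]
    rw [Real.log_div (by positivity) (by positivity)]
    ring

theorem stmt15 (δ : ℝ) (hδ : 0 < δ) (s : ℝ) :
    ((1/2) * deriv (F2 δ) s * s - F2 δ s) - ((1/2) * deriv (F1 δ) s * s - F1 δ s)
      = (1/2) * s^2 := by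
  rcases eq_or_ne s 0 with rfl | hs
  · simp [F1, F2, hδ, hδ.le]
  have h1 : HasDerivAt (fun x : ℝ => x^2) (2*s) s := by
    simpa using hasDerivAt_pow 2 s
  have h2 := (h1.const_mul (1/2)).mul (h1.log (by positivity))
  have h3 := (F2_diff δ hδ s hs).hasDerivAt.sub h2
  have h4 : deriv (F1 δ) s = deriv (F2 δ) s - (1 / 2 * (2 * s) * Real.log (s ^ 2) + 1 / 2 * s ^ 2 * (2 * s / s ^ 2)) := by
    rw [F1_eq δ hδ]
    exact h3.deriv
  rw [h4, F1_eq δ hδ]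
  field_simp
  ring
end
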